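/- The map j_α ∘ ι_α : M → N_upp does not depend on the choice of α ∈ A; denoting it ι_upp, the map ι_upp is an open embedding of M into N_upp. If moreover ι_α has dense image in N_α for every α ∈ A, then ι_upp has dense image in N_upp. -/

import Mathlib

open Topology Filter

/-- The identification relation on the disjoint union `Σ α, N α`:
`(α,p) ∼ (β,q)` iff (`α ≤ β` and `ψ_{αβ}(p) = q`) or (`β ≤ α` and `ψ_{βα}(q) = p`). -/
def simRel {A : Type*} [LinearOrder A] {N : A → Type*}
    (ψ : ∀ α β : A, α ≤ β → N α → N β) :
    (Σ α, N α) → (Σ α, N α) → Prop :=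
  fun x y =>
    (∃ h : x.1 ≤ y.1, ψ x.1 y.1 h x.2 = y.2) ∨
    (∃ h : y.1 ≤ x.1, ψ y.1 x.1 h y.2 = x.2)

/-!
For a point `m` of `M`, the set of all copies `(α, ι α m)` is invariant under the identification,
because each `ψ` is injective and carries `ι` to `ι`. Hence a point of `N α` is identified with the
image of `m` only if it is `ι α m` itself, so `ι_upp` is injective and the trace of `ι_upp '' U` on
`N α` is the open set `ι α '' U`. Density holds because it holds in each `N α`, and these cover the
quotient.
-/

section SigmaQuot

variable {A : Type*} {N : A → Type*}

/-- The canonical map `j_α` from the summand `N α` to a quotient of `Σ α, N α`. The relation `r` is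
arbitrary, and `Quot r` is the quotient by the equivalence relation it generates. -/
def sigmaQuotMk (r : (Σ α, N α) → (Σ α, N α) → Prop) (α : A) (p : N α) : Quot r :=
  Quot.mk r ⟨α, p⟩

variable {r : (Σ α, N α) → (Σ α, N α) → Prop} [∀ α, TopologicalSpace (N α)]

theorem continuous_sigmaQuotMk (α : A) : Continuous (sigmaQuotMk r α) :=
  continuous_quot_mk.comp continuous_sigmaMk

theorem isOpen_iff_forall_preimage_sigmaQuotMk {U : Set (Quot r)} :
    IsOpen U ↔ ∀ α, IsOpen (sigmaQuotMk r α ⁻¹' U) :=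
  isQuotientMap_quot_mk.isOpen_preimage.symm.trans isOpen_sigma_iff

variable {M : Type*} {ι : ∀ α, M → N α} {g : M → Quot r}

theorem isOpenEmbedding_of_sigmaQuotMk_eq_iff [TopologicalSpace M] [Nonempty A]
    (hι : ∀ α, IsOpenEmbedding (ι α))
    (hg : ∀ α p m, sigmaQuotMk r α p = g m ↔ p = ι α m) : IsOpenEmbedding g := by
  obtain ⟨α⟩ := ‹Nonempty A›
  have g_eq : sigmaQuotMk r α ∘ ι α = g := funext fun m => (hg α _ m).2 rfl
  refine .of_continuous_injective_isOpenMap ?_ ?_ ?_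
  · exact g_eq ▸ (continuous_sigmaQuotMk α).comp (hι α).continuous
  · intro m m' h
    exact (hι α).injective ((hg α _ m').1 ((congrFun g_eq m).trans h))
  · intro U hU
    refine isOpen_iff_forall_preimage_sigmaQuotMk.2 fun β => ?_
    have preimage_image : sigmaQuotMk r β ⁻¹' (g '' U) = ι β '' U := by
      ext p
      simp only [Set.mem_preimage, Set.mem_image, eq_comm (b := sigmaQuotMk r β p), hg,
        eq_comm (b := p)]
    exact preimage_image ▸ (hι β).isOpenMap U hU

theorem denseRange_of_sigmaQuotMk_comp_eq (hι : ∀ α, DenseRange (ι α))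
    (hg : ∀ α, sigmaQuotMk r α ∘ ι α = g) : DenseRange g := by
  rintro ⟨α, p⟩
  rw [← hg α, Set.range_comp]
  exact (continuous_sigmaQuotMk α).range_subset_closure_image_dense (hι α) ⟨p, rfl⟩

end SigmaQuot

theorem mem_iff_mem_of_quotMk_eq {X : Type*} {r : X → X → Prop} {s : Set X}
    (hs : ∀ x y, r x y → (x ∈ s ↔ y ∈ s)) {x y : X} (h : Quot.mk r x = Quot.mk r y) :
    x ∈ s ↔ y ∈ s :=
  Iff.of_eq <| congrArg (Quot.lift (· ∈ s) fun a b hab => propext (hs a b hab)) h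

namespace simRel

variable {M A : Type*} [LinearOrder A] {N : A → Type*} {ι : ∀ α, M → N α}
  {ψ : ∀ α β : A, α ≤ β → N α → N β}

theorem sigmaQuotMk_comp_eq (hψι : ∀ α β h, ψ α β h ∘ ι α = ι β) (α β : A) :
    sigmaQuotMk (simRel ψ) α ∘ ι α = sigmaQuotMk (simRel ψ) β ∘ ι β := by
  funext m
  refine Quot.sound ?_
  rcases le_total α β with h | h
  · exact .inl ⟨h, congrFun (hψι α β h) m⟩
  · exact .inr ⟨h, congrFun (hψι β α h) m⟩

theorem eq_apply_iff (hψ : ∀ α β h, Function.Injective (ψ α β h))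
    (hψι : ∀ α β h, ψ α β h ∘ ι α = ι β) (m : M) {x y : Σ α, N α} (hxy : simRel ψ x y) :
    x.2 = ι x.1 m ↔ y.2 = ι y.1 m := by
  have transition_eq_iff {α β : A} (h : α ≤ β) (p : N α) : ψ α β h p = ι β m ↔ p = ι α m := by
    rw [← hψι α β h, Function.comp_apply, (hψ α β h).eq_iff]
  rcases hxy with ⟨h, hx⟩ | ⟨h, hy⟩
  · rw [← hx, transition_eq_iff]
  · rw [← hy, transition_eq_iff]

theorem sigmaQuotMk_eq_iff (hψ : ∀ α β h, Function.Injective (ψ α β h))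
    (hψι : ∀ α β h, ψ α β h ∘ ι α = ι β) (α β : A) (p : N β) (m : M) :
    sigmaQuotMk (simRel ψ) β p = sigmaQuotMk (simRel ψ) α (ι α m) ↔ p = ι β m := by
  constructor
  · intro h
    let copies : Set (Σ α, N α) := {x | x.2 = ι x.1 m}
    have copies_invariant : ∀ x y, simRel ψ x y → (x ∈ copies ↔ y ∈ copies) :=
      fun _ _ => eq_apply_iff hψ hψι m
    have mem_copies : ⟨α, ι α m⟩ ∈ copies := rfl
    exact (mem_iff_mem_of_quotMk_eq copies_invariant h).2 mem_copies
  · rintro rfl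
    exact congrFun (sigmaQuotMk_comp_eq hψι β α) m

end simRel

theorem iotaUpp_isOpenEmbedding_general
    {M : Type*} [TopologicalSpace M] {A : Type*} [LinearOrder A]
    {N : A → Type*} [∀ α, TopologicalSpace (N α)]
    (ι : ∀ α, M → N α) (hι : ∀ α, IsOpenEmbedding (ι α))
    (ψ : ∀ α β : A, α ≤ β → N α → N β)
    (hψ : ∀ (α β : A) (h : α ≤ β), Function.Injective (ψ α β h))
    (hψι : ∀ (α β : A) (h : α ≤ β), ψ α β h ∘ ι α = ι β) :
    (∀ α β : A, (fun m => Quot.mk (simRel ψ) ⟨α, ι α m⟩) =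
        (fun m => Quot.mk (simRel ψ) ⟨β, ι β m⟩)) ∧
    (∀ α : A, IsOpenEmbedding (fun m => Quot.mk (simRel ψ) ⟨α, ι α m⟩)) ∧
    ((∀ α : A, DenseRange (ι α)) →
      ∀ α : A, DenseRange (fun m => Quot.mk (simRel ψ) ⟨α, ι α m⟩)) := by
  refine ⟨simRel.sigmaQuotMk_comp_eq hψι, fun α => ?_, fun hdense α => ?_⟩
  · have : Nonempty A := ⟨α⟩
    exact isOpenEmbedding_of_sigmaQuotMk_eq_iff hι (simRel.sigmaQuotMk_eq_iff hψ hψι α)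
  · exact denseRange_of_sigmaQuotMk_comp_eq hdense
      fun β => simRel.sigmaQuotMk_comp_eq hψι β α

/-- The map `j_α ∘ ι_α : M → N_upp` does not depend on `α`; it is an open embedding, and it
has dense image provided every `ι_α` has dense image. -/
theorem iotaUpp_isOpenEmbedding
    {M : Type*} [TopologicalSpace M]
    {A : Type*} [LinearOrder A] [Nonempty A]
    {N : A → Type*} [∀ α, TopologicalSpace (N α)]
    (ι : ∀ α, M → N α) (hι : ∀ α, IsOpenEmbedding (ι α))
    (ψ : ∀ α β : A, α ≤ β → N α → N β)
    (hψ : ∀ (α β : A) (h : α ≤ β), IsOpenEmbedding (ψ α β h))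
    (hψι : ∀ (α β : A) (h : α ≤ β), (ψ α β h) ∘ (ι α) = ι β)
    (hψid : ∀ (α : A) (h : α ≤ α), ψ α α h = id)
    (hψcomp : ∀ (α β γ : A) (h₁ : α ≤ β) (h₂ : β ≤ γ),
      (ψ β γ h₂) ∘ (ψ α β h₁) = ψ α γ (h₁.trans h₂)) :
    (∀ α β : A, (fun m => Quot.mk (simRel ψ) ⟨α, ι α m⟩) =
        (fun m => Quot.mk (simRel ψ) ⟨β, ι β m⟩)) ∧
    (∀ α : A, IsOpenEmbedding (fun m => Quot.mk (simRel ψ) ⟨α, ι α m⟩)) ∧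
    ((∀ α : A, DenseRange (ι α)) →
      ∀ α : A, DenseRange (fun m => Quot.mk (simRel ψ) ⟨α, ι α m⟩)) :=
  iotaUpp_isOpenEmbedding_general ι hι ψ (fun α β h => (hψ α β h).injective) hψι
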